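/- Suppose for each firm f the family ℋ_f is an intersecting family of subsets of W and the integer quotas satisfy λ̄_D = g_f(D) for all D ∈ ℋ_f, where g_f is integer-valued and submodular on intersecting pairs of ℋ_f. Then the linear program (LP) — maximize Σ_{w∈W} Σ_{f∈F} α(w,f) x_{w,f} over x ∈ ℝ^{W×F} subject to x ≥ 0, Σ_{f∈F} x_{w,f} ≤ 1 for every worker w, and Σ_{w∈D} x_{w,f} ≤ λ̄_D for every firm f and every D ∈ ℋ_f — has an optimal solution x* with x*_{w,f} ∈ {0,1} for all worker-firm pairs (w,f). -/

import Mathlib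

open Finset

namespace TwoSidedMatching

variable {W F : Type*} [Fintype W] [DecidableEq W] [Fintype F] [DecidableEq F]

/-- The set of workers assigned to firm `f` under assignment `X`. -/
def assigned (X : W → Option F) (f : F) : Finset W :=
  Finset.univ.filter fun w => X w = some f

/-- Payoff of worker `w`: `a w f + s w f` if matched to `f`, and `0` if unmatched. -/
def workerPayoff (a s : W → F → ℝ) (X : W → Option F) (w : W) : ℝ :=
  match X w with
  | some f => a w f + s w f
  | none => 0

/-- Payoff of firm `f`: value of its assigned set minus total salaries paid. -/
def firmPayoff (b : Finset W → F → ℝ) (s : W → F → ℝ) (X : W → Option F) (f : F) : ℝ :=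
  b (assigned X f) f - ∑ w ∈ assigned X f, s w f

/-- An assignment is feasible if each firm's assigned set is feasible or empty. -/
def Feasible (𝒯 : F → Set (Finset W)) (X : W → Option F) : Prop :=
  ∀ f : F, assigned X f ∈ 𝒯 f ∨ assigned X f = ∅

/-- r-feasibility: each firm's assigned set is feasible. -/
def RFeasible (𝒯 : F → Set (Finset W)) (X : W → Option F) : Prop :=
  ∀ f : F, assigned X f ∈ 𝒯 f

/-- A blocking coalition: a firm `f`, a feasible set `D ∈ 𝒯 f`, and salaries `r`
making all members of `D ∪ {f}` weakly better off and at least one strictly better off. -/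
def Blocks (a : W → F → ℝ) (b : Finset W → F → ℝ) (𝒯 : F → Set (Finset W))
    (s : W → F → ℝ) (X : W → Option F) : Prop :=
  ∃ f : F, ∃ D ∈ 𝒯 f, ∃ r : W → ℝ,
    (∀ w ∈ D, a w f + r w ≥ workerPayoff a s X w) ∧
    (b D f - ∑ w ∈ D, r w ≥ firmPayoff b s X f) ∧
    ((∃ w ∈ D, a w f + r w > workerPayoff a s X w) ∨
      b D f - ∑ w ∈ D, r w > firmPayoff b s X f)

/-- Stability: feasible, individually rational for workers and firms, and no blocking coalition. -/
def Stable (a : W → F → ℝ) (b : Finset W → F → ℝ) (𝒯 : F → Set (Finset W))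
    (s : W → F → ℝ) (X : W → Option F) : Prop :=
  Feasible 𝒯 X ∧ (∀ w, 0 ≤ workerPayoff a s X w) ∧
    (∀ f, 0 ≤ firmPayoff b s X f) ∧ ¬ Blocks a b 𝒯 s X

/-- r-stability: r-feasible, individually rational for workers, and no blocking coalition. -/
def RStable (a : W → F → ℝ) (b : Finset W → F → ℝ) (𝒯 : F → Set (Finset W))
    (s : W → F → ℝ) (X : W → Option F) : Prop :=
  RFeasible 𝒯 X ∧ (∀ w, 0 ≤ workerPayoff a s X w) ∧ ¬ Blocks a b 𝒯 s X

/-- Total match value of an assignment. -/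
def totalValue (a : W → F → ℝ) (b : Finset W → F → ℝ) (X : W → Option F) : ℝ :=
  (∑ w : W, match X w with
    | some f => a w f
    | none => 0) +
  ∑ f : F, b (assigned X f) f

/-- Two sets are intersecting if their intersection and both differences are nonempty. -/
def IntersectingSets (A B : Finset W) : Prop :=
  (A ∩ B).Nonempty ∧ (A \ B).Nonempty ∧ (B \ A).Nonempty

/-- An intersecting family: does not contain `∅` and is closed under
intersections and unions of intersecting members. -/
def IntersectingFamily (ℋ : Set (Finset W)) : Prop :=
  ∅ ∉ ℋ ∧ ∀ A ∈ ℋ, ∀ B ∈ ℋ, IntersectingSets A B → A ∩ B ∈ ℋ ∧ A ∪ B ∈ ℋ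

/-- Submodularity on intersecting pairs of a family. -/
def SubmodularOnIntersecting (ℋ : Set (Finset W)) (g : Finset W → ℤ) : Prop :=
  ∀ A ∈ ℋ, ∀ B ∈ ℋ, IntersectingSets A B → g (A ∪ B) + g (A ∩ B) ≤ g A + g B

/-- Supermodularity on intersecting pairs of a family. -/
def SupermodularOnIntersecting (ℋ : Set (Finset W)) (g : Finset W → ℤ) : Prop :=
  ∀ A ∈ ℋ, ∀ B ∈ ℋ, IntersectingSets A B → g A + g B ≤ g (A ∪ B) + g (A ∩ B)

/-- A hierarchy: `∅` is not a member and any two members are nested or disjoint. -/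
def Hierarchy (ℋ : Set (Finset W)) : Prop :=
  ∅ ∉ ℋ ∧ ∀ A ∈ ℋ, ∀ B ∈ ℋ, A ⊆ B ∨ B ⊆ A ∨ A ∩ B = ∅

/-- Feasible sets under upper-bound quotas: `|D ∩ D'| ≤ lam D'` for every `D' ∈ ℋ`. -/
def upperSets (ℋ : Set (Finset W)) (lam : Finset W → ℤ) : Set (Finset W) :=
  {D | ∀ D' ∈ ℋ, ((D ∩ D').card : ℤ) ≤ lam D'}

/-- Feasible sets under lower and upper quotas: `lo D' ≤ |D ∩ D'| ≤ hi D'` for `D' ∈ ℋ`. -/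
def quotaSets (ℋ : Set (Finset W)) (lo hi : Finset W → ℤ) : Set (Finset W) :=
  {D | ∀ D' ∈ ℋ, lo D' ≤ ((D ∩ D').card : ℤ) ∧ ((D ∩ D').card : ℤ) ≤ hi D'}

/-- Feasibility for the matching LP with upper-bound constraints. -/
def LPFeasible (ℋ : F → Set (Finset W)) (lam : F → Finset W → ℤ) (x : W → F → ℝ) : Prop :=
  (∀ w f, 0 ≤ x w f) ∧ (∀ w, ∑ f : F, x w f ≤ 1) ∧
    ∀ f : F, ∀ D ∈ ℋ f, ∑ w ∈ D, x w f ≤ (lam f D : ℝ)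

/-- Feasibility for the matching LP with lower and upper bound constraints. -/
def LPLBFeasible (ℋ : F → Set (Finset W)) (lo hi : F → Finset W → ℤ) (x : W → F → ℝ) : Prop :=
  (∀ w f, 0 ≤ x w f) ∧ (∀ w, ∑ f : F, x w f ≤ 1) ∧
    ∀ f : F, ∀ D ∈ ℋ f, (lo f D : ℝ) ≤ ∑ w ∈ D, x w f ∧ ∑ w ∈ D, x w f ≤ (hi f D : ℝ)

/-- The LP objective: total match value of a fractional assignment. -/
def LPobj (α : W → F → ℝ) (x : W → F → ℝ) : ℝ :=
  ∑ w : W, ∑ f : F, α w f * x w f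


open Filter Topology

/-- A finite sum with integer value cannot have exactly one term outside `{0, 1}`. -/
lemma exists_ne_fractional {ι : Type*} [DecidableEq ι] (S : Finset ι) (x : ι → ℝ) (n : ℤ)
    (hS : ∑ i ∈ S, x i = n) {i : ι} (hi : i ∈ S) (h0 : 0 < x i) (h1 : x i < 1) :
    ∃ j ∈ S, j ≠ i ∧ x j ≠ 0 ∧ x j ≠ 1 := by
  by_contra! h
  have hrest : ∃ m : ℤ, ∑ j ∈ S.erase i, x j = m := by
    refine ⟨∑ j ∈ S.erase i, if x j = 0 then 0 else 1, ?_⟩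
    push_cast
    refine Finset.sum_congr rfl fun j hj => ?_
    split_ifs with hj0
    · exact hj0
    · exact h j (Finset.mem_of_mem_erase hj) (Finset.ne_of_mem_erase hj) hj0
  obtain ⟨m, hm⟩ := hrest
  have hx : x i = ((n - m : ℤ) : ℝ) := by
    push_cast
    linarith [Finset.add_sum_erase S x hi]
  rw [hx] at h0 h1
  norm_cast at h0 h1
  omega

/-- If a family is closed under unions and intersections of overlapping members and `x` has
integer sums over its members, then `x` has integer sums over unions of members. -/
lemma exists_int_sum_of_covered {W : Type*} [Finite W] [DecidableEq W] (T : Set (Finset W))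
    (hT : ∀ A ∈ T, ∀ B ∈ T, (A ∩ B).Nonempty → A ∩ B ∈ T ∧ A ∪ B ∈ T)
    (x : W → ℝ) (hx : ∀ A ∈ T, ∃ n : ℤ, ∑ w ∈ A, x w = n) (U : Finset W)
    (hU : ∀ w ∈ U, ∃ A ∈ T, w ∈ A ∧ A ⊆ U) : ∃ n : ℤ, ∑ w ∈ U, x w = n := by
  induction U using Finset.strongInduction with
  | H U ih =>
    rcases U.eq_empty_or_nonempty with rfl | ⟨w, hw⟩
    · exact ⟨0, by simp⟩
    obtain ⟨A₀, hA₀T, hwA₀, hA₀U⟩ := hU w hw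
    obtain ⟨A, hA₀A, ⟨hAT, hAU⟩, hmax⟩ :=
      (Set.toFinite {A : Finset W | A ∈ T ∧ A ⊆ U}).exists_le_maximal ⟨hA₀T, hA₀U⟩
    have hss : U \ A ⊂ U :=
      Finset.sdiff_ssubset hAU ⟨w, hA₀A hwA₀⟩
    obtain ⟨m, hm⟩ := ih (U \ A) hss fun v hv => by
      rw [Finset.mem_sdiff] at hv
      obtain ⟨B, hBT, hvB, hBU⟩ := hU v hv.1
      refine ⟨B, hBT, hvB, Finset.subset_sdiff.2 ⟨hBU, ?_⟩⟩
      by_contra hdis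
      rw [Finset.disjoint_iff_inter_eq_empty, ← ne_eq, ← Finset.nonempty_iff_ne_empty,
        Finset.inter_comm] at hdis
      exact hv.2 (hmax ⟨(hT A hAT B hBT hdis).2, Finset.union_subset hAU hBU⟩
        Finset.subset_union_left (Finset.mem_union_right _ hvB))
    obtain ⟨n, hn⟩ := hx A hAT
    exact ⟨m + n, by push_cast; rw [← hm, ← hn, Finset.sum_sdiff hAU]⟩

open Classical in
/-- If a family is closed under unions and intersections of overlapping members and `x` has
integer sums over its members, then `x` has integer sums over the atoms of the family. -/
lemma exists_int_sum_atom {W : Type*} [Fintype W] [DecidableEq W] (T : Set (Finset W))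
    (hT : ∀ A ∈ T, ∀ B ∈ T, (A ∩ B).Nonempty → A ∩ B ∈ T ∧ A ∪ B ∈ T)
    (x : W → ℝ) (hx : ∀ A ∈ T, ∃ n : ℤ, ∑ w ∈ A, x w = n) (w : W) (hw : ∃ A ∈ T, w ∈ A) :
    ∃ n : ℤ, ∑ v with ∀ A ∈ T, v ∈ A ↔ w ∈ A, x v = n := by
  obtain ⟨A₀, hA₀T, hwA₀⟩ := hw
  obtain ⟨D, -, ⟨hDT, hwD⟩, hmin⟩ :=
    (Set.toFinite {A : Finset W | A ∈ T ∧ w ∈ A}).exists_le_minimal ⟨hA₀T, hwA₀⟩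
  have hD : ∀ B ∈ T, w ∈ B → D ⊆ B := fun B hB hwB =>
    (hmin ⟨(hT D hDT B hB ⟨w, Finset.mem_inter.2 ⟨hwD, hwB⟩⟩).1,
      Finset.mem_inter.2 ⟨hwD, hwB⟩⟩ Finset.inter_subset_left).trans Finset.inter_subset_right
  obtain ⟨m, hm⟩ := exists_int_sum_of_covered T hT x hx
    (D.filter fun v => ∃ B ∈ T, v ∈ B ∧ w ∉ B) fun v hv => by
      rw [Finset.mem_filter] at hv
      obtain ⟨hvD, B, hB, hvB, hwB⟩ := hv
      refine ⟨D ∩ B, (hT D hDT B hB ⟨v, Finset.mem_inter.2 ⟨hvD, hvB⟩⟩).1,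
        Finset.mem_inter.2 ⟨hvD, hvB⟩, fun u hu => ?_⟩
      rw [Finset.mem_inter] at hu
      exact Finset.mem_filter.2 ⟨hu.1, B, hB, hu.2, hwB⟩
  obtain ⟨n, hn⟩ := hx D hDT
  have hatom : (Finset.univ.filter fun v => ∀ A ∈ T, v ∈ A ↔ w ∈ A) =
      D.filter fun v => ¬ ∃ B ∈ T, v ∈ B ∧ w ∉ B := by
    ext v
    simp only [Finset.mem_filter, Finset.mem_univ, true_and]
    constructor
    · exact fun h => ⟨(h D hDT).2 hwD, fun ⟨B, hB, hvB, hwB⟩ => hwB ((h B hB).1 hvB)⟩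
    · rintro ⟨hvD, h⟩ A hA
      exact ⟨fun hvA => by_contra fun hwA => h ⟨A, hA, hvA, hwA⟩, fun hwA => hD A hA hwA hvD⟩
  refine ⟨n - m, ?_⟩
  push_cast
  rw [hatom, ← hn, ← hm, ← Finset.sum_filter_add_sum_filter_not D
    (fun v => ∃ B ∈ T, v ∈ B ∧ w ∉ B)]
  ring

open Classical in
/-- If no label is attained exactly once on `P`, then the labels attained on `P` are at most
half as many as the elements of `P`. -/
lemma two_mul_card_image_filter_le {E A : Type*} [Fintype E] (a : E → A) (P : E → Prop)
    (h : ∀ e, P e → ∃ e', e' ≠ e ∧ P e' ∧ a e' = a e) :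
    2 * ((Finset.univ.filter P).image a).card ≤ (Finset.univ.filter P).card := by
  refine Finset.mul_card_image_le_card _ _ fun v hv => ?_
  obtain ⟨e, he, rfl⟩ := Finset.mem_image.1 hv
  have hPe := (Finset.mem_filter.1 he).2
  obtain ⟨e', hne, hP, hae⟩ := h e hPe
  exact Finset.one_lt_card.2 ⟨e', by simp [hP, hae], e, by simp [hPe], hne⟩

open Classical in
/-- Two partial labelings of a nonempty finite type, each without labels attained exactly once,
have a nonzero weighting whose sums over all label classes vanish. -/
lemma exists_ne_zero_class_sums_eq_zero {E A B : Type*} [Fintype E] [Nonempty E]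
    (a : E → A) (b : E → B) (P Q : E → Prop)
    (ha : ∀ e, P e → ∃ e', e' ≠ e ∧ P e' ∧ a e' = a e)
    (hb : ∀ e, Q e → ∃ e', e' ≠ e ∧ Q e' ∧ b e' = b e) :
    ∃ d : E → ℝ, d ≠ 0 ∧ (∀ v, ∑ e with P e ∧ a e = v, d e = 0) ∧
      ∀ v, ∑ e with Q e ∧ b e = v, d e = 0 := by
  have hA := two_mul_card_image_filter_le a P ha
  have hB := two_mul_card_image_filter_le b Q hb
  have hPE := Finset.card_filter_le (Finset.univ : Finset E) P
  have hQE := Finset.card_filter_le (Finset.univ : Finset E) Q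
  set SA := (Finset.univ.filter P).image a with hSA
  set SB := (Finset.univ.filter Q).image b with hSB
  let T : (E → ℝ) →ₗ[ℝ] (SA → ℝ) × (SB → ℝ) :=
    { toFun := fun d => (fun v => ∑ e with P e ∧ a e = v, d e,
        fun v => ∑ e with Q e ∧ b e = v, d e)
      map_add' := fun d d' => by ext <;> simp [Finset.sum_add_distrib]
      map_smul' := fun c d => by ext <;> simp [Finset.mul_sum] }
  have hninj : ¬ Function.Injective T := by
    intro hinj
    have hle := LinearMap.finrank_le_finrank_of_injective hinj
    have hrank : Module.finrank ℝ ((SA → ℝ) × (SB → ℝ)) = SA.card + SB.card := by simp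
    have hrankE : Module.finrank ℝ (E → ℝ) = (Finset.univ : Finset E).card := by simp
    rw [hrank, hrankE] at hle
    have hsurj := (LinearMap.injective_iff_surjective_of_finrank_eq_finrank
      (hrankE.trans ((by omega : _ = _).trans hrank.symm))).1 hinj
    have hP : ∀ e, P e := by
      simpa using Finset.card_filter_eq_iff.1 (by omega :
        (Finset.univ.filter P).card = (Finset.univ : Finset E).card)
    have hQ : ∀ e, Q e := by
      simpa using Finset.card_filter_eq_iff.1 (by omega :
        (Finset.univ.filter Q).card = (Finset.univ : Finset E).card)
    obtain ⟨e₀⟩ := ‹Nonempty E›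
    obtain ⟨d, hd⟩ := hsurj (0, fun _ => 1)
    have hd1 : ∑ e, d e = 0 := by
      rw [← Finset.sum_fiberwise_of_maps_to (s := Finset.univ) (t := SA) (g := a)
        fun e _ => by simpa [hSA] using ⟨e, hP e, rfl⟩]
      refine Finset.sum_eq_zero fun v hv => ?_
      simpa [T, hP] using congrFun (congrArg Prod.fst hd) ⟨v, hv⟩
    have hd2 : ∑ e, d e = SB.card := by
      rw [← Finset.sum_fiberwise_of_maps_to (s := Finset.univ) (t := SB) (g := b)
        fun e _ => by simpa [hSB] using ⟨e, hQ e, rfl⟩, Finset.card_eq_sum_ones, Nat.cast_sum]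
      refine Finset.sum_congr rfl fun v hv => ?_
      simpa [T, hQ] using congrFun (congrArg Prod.snd hd) ⟨v, hv⟩
    have hpos : 0 < SB.card :=
      Finset.card_pos.2 ⟨b e₀, by simpa [hSB] using ⟨e₀, hQ e₀, rfl⟩⟩
    rw [hd1] at hd2
    exact hpos.ne (by exact_mod_cast hd2)
  rw [injective_iff_map_eq_zero] at hninj
  push Not at hninj
  obtain ⟨d, hd, hd0⟩ := hninj
  refine ⟨d, hd0, fun v => ?_, fun v => ?_⟩
  · by_cases hv : v ∈ SA
    · exact congrFun (congrArg Prod.fst hd) ⟨v, hv⟩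
    · rw [Finset.filter_false_of_mem, Finset.sum_empty]
      rintro e - ⟨he, rfl⟩
      exact hv (by simpa [hSA] using ⟨e, he, rfl⟩)
  · by_cases hv : v ∈ SB
    · exact congrFun (congrArg Prod.snd hd) ⟨v, hv⟩
    · rw [Finset.filter_false_of_mem, Finset.sum_empty]
      rintro e - ⟨he, rfl⟩
      exact hv (by simpa [hSB] using ⟨e, he, rfl⟩)

open Classical in
/-- A version of `exists_ne_zero_class_sums_eq_zero` for weightings supported on a subset. -/
lemma exists_ne_zero_class_sums_eq_zero_of_support {E A B : Type*} [Fintype E]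
    (S : Finset E) (hS : S.Nonempty) (a : E → A) (b : E → B) (P Q : E → Prop)
    (ha : ∀ e ∈ S, P e → ∃ e' ∈ S, e' ≠ e ∧ P e' ∧ a e' = a e)
    (hb : ∀ e ∈ S, Q e → ∃ e' ∈ S, e' ≠ e ∧ Q e' ∧ b e' = b e) :
    ∃ d : E → ℝ, d ≠ 0 ∧ (∀ e ∉ S, d e = 0) ∧ (∀ v, ∑ e with P e ∧ a e = v, d e = 0) ∧
      ∀ v, ∑ e with Q e ∧ b e = v, d e = 0 := by
  have := hS.to_subtype
  obtain ⟨d, hd0, hdP, hdQ⟩ := exists_ne_zero_class_sums_eq_zero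
    (fun e : S => a e) (fun e : S => b e) (fun e => P e) (fun e => Q e)
    (fun e he => by
      obtain ⟨e', h, hne, h'⟩ := ha e e.2 he
      exact ⟨⟨e', h⟩, fun hc => hne (congrArg Subtype.val hc), h'⟩)
    (fun e he => by
      obtain ⟨e', h, hne, h'⟩ := hb e e.2 he
      exact ⟨⟨e', h⟩, fun hc => hne (congrArg Subtype.val hc), h'⟩)
  let d' : E → ℝ := fun e => if h : e ∈ S then d ⟨e, h⟩ else 0
  have hd' : ∀ e : S, d' e = d e := fun e => by simp [d']
  have hoff : ∀ e ∉ S, d' e = 0 := fun e he => by simp [d', he]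
  have hsum : ∀ (R : E → Prop) [DecidablePred R], ∑ e with R e, d' e =
      ∑ e ∈ Finset.univ.filter fun e : S => R e, d e := fun R _ => by
    rw [Finset.sum_filter, Finset.sum_filter, ← Finset.sum_subset (Finset.subset_univ S)
      fun e _ he => by simp [hoff e he], ← Finset.sum_coe_sort]
    simp only [hd']
  refine ⟨d', fun h => hd0 (funext fun e => ?_), hoff, fun v => ?_, fun v => ?_⟩
  · rw [← hd', h]
    rfl
  · rw [hsum fun e => P e ∧ a e = v]
    exact hdP v
  · rw [hsum fun e => Q e ∧ b e = v]
    exact hdQ v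

/-- A weak inequality persists under small perturbations that preserve it when it is tight. -/
lemma eventually_add_mul_le {a b c : ℝ} (h : a ≤ c) (hb : a = c → b = 0) :
    ∀ᶠ t in 𝓝 (0 : ℝ), a + t * b ≤ c := by
  rcases h.eq_or_lt with h | h
  · simp [hb h, h]
  · have hc : Tendsto (fun t : ℝ => a + t * b) (𝓝 0) (𝓝 a) := by
      have : Continuous fun t : ℝ => a + t * b := by fun_prop
      simpa using this.tendsto 0
    exact (hc.eventually_lt_const h).mono fun t ht => ht.le

/-- Perturbing a feasible point in a direction that preserves all tight constraints keeps it
feasible for a short time. -/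
lemma LPFeasible.eventually_add_mul {W F : Type*} [Fintype W] [Fintype F]
    {ℋ : F → Set (Finset W)} {lam : F → Finset W → ℤ} {x d : W → F → ℝ} 
    (hx : LPFeasible ℋ lam x) (h0 : ∀ w f, x w f = 0 → d w f = 0)
    (hrow : ∀ w, ∑ f, x w f = 1 → ∑ f, d w f = 0)
    (hcol : ∀ f, ∀ D ∈ ℋ f, ∑ w ∈ D, x w f = lam f D → ∑ w ∈ D, d w f = 0) :
    ∀ᶠ t in 𝓝 (0 : ℝ), LPFeasible ℋ lam fun w f => x w f + t * d w f := by
  simp only [LPFeasible, Finset.sum_add_distrib, ← Finset.mul_sum, eventually_and,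
    eventually_all]
  refine ⟨fun w f => ?_, fun w => eventually_add_mul_le (hx.2.1 w) (hrow w),
    fun f D hD => eventually_add_mul_le (hx.2.2 f D hD) (hcol f D hD)⟩
  have := eventually_add_mul_le (a := -x w f) (b := -d w f) (c := 0)
    (by linarith [hx.1 w f]) fun h => by rw [h0 w f (by linarith), neg_zero]
  exact this.mono fun t ht => by linarith

/-- The feasible set of the matching LP is compact. -/
lemma isCompact_setOf_LPFeasible {W F : Type*} [Fintype F] (ℋ : F → Set (Finset W))
    (lam : F → Finset W → ℤ) :
    IsCompact {x : W → F → ℝ | LPFeasible ℋ lam x} := by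
  refine (isCompact_Icc (a := (0 : W → F → ℝ)) (b := 1)).of_isClosed_subset ?_ ?_
  · simp only [LPFeasible, Set.ofPred_and, Set.ofPred_forall]
    refine IsClosed.inter ?_ (IsClosed.inter ?_ ?_)
    · exact isClosed_iInter fun w => isClosed_iInter fun f =>
        isClosed_le (by fun_prop) (by fun_prop)
    · exact isClosed_iInter fun w => isClosed_le (by fun_prop) (by fun_prop)
    · exact isClosed_iInter fun f => isClosed_iInter fun D => isClosed_iInter fun _ =>
        isClosed_le (by fun_prop) (by fun_prop)
  · intro x hx
    exact ⟨fun w f => hx.1 w f, fun w f =>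
      (Finset.single_le_sum (fun f _ => hx.1 w f) (Finset.mem_univ f)).trans (hx.2.1 w)⟩

/-- The constraints of an intersecting family that are tight at a feasible point are closed
under unions and intersections of overlapping members. -/
lemma tight_inter_union {W : Type*} [DecidableEq W] {ℋ : Set (Finset W)} {g : Finset W → ℤ}
    (hfam : IntersectingFamily ℋ) (hsub : SubmodularOnIntersecting ℋ g)
    {x : W → ℝ} (hx : ∀ D ∈ ℋ, ∑ w ∈ D, x w ≤ (g D : ℝ)) {A B : Finset W}
    (hA : A ∈ ℋ ∧ ∑ w ∈ A, x w = g A) (hB : B ∈ ℋ ∧ ∑ w ∈ B, x w = g B)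
    (hAB : (A ∩ B).Nonempty) :
    (A ∩ B ∈ ℋ ∧ ∑ w ∈ A ∩ B, x w = g (A ∩ B)) ∧
      (A ∪ B ∈ ℋ ∧ ∑ w ∈ A ∪ B, x w = g (A ∪ B)) := by
  by_cases h₁ : A ⊆ B
  · rw [Finset.inter_eq_left.2 h₁, Finset.union_eq_right.2 h₁]
    exact ⟨hA, hB⟩
  by_cases h₂ : B ⊆ A
  · rw [Finset.inter_eq_right.2 h₂, Finset.union_eq_left.2 h₂]
    exact ⟨hB, hA⟩
  have hint : IntersectingSets A B :=
    ⟨hAB, Finset.sdiff_nonempty.2 h₁, Finset.sdiff_nonempty.2 h₂⟩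
  obtain ⟨hI, hU⟩ := hfam.2 A hA.1 B hB.1 hint
  have hg : (g (A ∪ B) : ℝ) + g (A ∩ B) ≤ g A + g B := by
    exact_mod_cast hsub A hA.1 B hB.1 hint
  have hs := Finset.sum_union_inter (s₁ := A) (s₂ := B) (f := x)
  have := hx _ hI
  have := hx _ hU
  exact ⟨⟨hI, by linarith [hA.2, hB.2]⟩, hU, by linarith [hA.2, hB.2]⟩

/-- At a feasible point with a fractional entry there is a nonzero direction preserving all
tight constraints. -/
lemma LPFeasible.exists_direction {ℋ : F → Set (Finset W)} {lam : F → Finset W → ℤ}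
    (hfam : ∀ f, IntersectingFamily (ℋ f)) (hsub : ∀ f, SubmodularOnIntersecting (ℋ f) (lam f))
    {x : W → F → ℝ} (hx : LPFeasible ℋ lam x) {w₀ : W} {f₀ : F} (h₀ : x w₀ f₀ ≠ 0)
    (h₁ : x w₀ f₀ ≠ 1) :
    ∃ d : W → F → ℝ, d ≠ 0 ∧ (∀ w f, x w f = 0 → d w f = 0) ∧
      (∀ w, ∑ f, x w f = 1 → ∑ f, d w f = 0) ∧
      ∀ f, ∀ D ∈ ℋ f, ∑ w ∈ D, x w f = lam f D → ∑ w ∈ D, d w f = 0 := by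
  classical
  let T : F → Set (Finset W) := fun f => {D | D ∈ ℋ f ∧ ∑ w ∈ D, x w f = lam f D}
  have hT : ∀ f, ∀ A ∈ T f, ∀ B ∈ T f, (A ∩ B).Nonempty → A ∩ B ∈ T f ∧ A ∪ B ∈ T f :=
    fun f A hA B hB hAB => tight_inter_union (hfam f) (hsub f) (hx.2.2 f) hA hB hAB
  have hle : ∀ w f, x w f ≤ 1 := fun w f =>
    (Finset.single_le_sum (fun f _ => hx.1 w f) (Finset.mem_univ f)).trans (hx.2.1 w)
  let S : Finset (W × F) := Finset.univ.filter fun e => x e.1 e.2 ≠ 0 ∧ x e.1 e.2 ≠ 1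
  have hS : ∀ w f, (w, f) ∈ S ↔ x w f ≠ 0 ∧ x w f ≠ 1 := by simp [S]
  let label : F → W → Set (Finset W) := fun f w => {A | A ∈ T f ∧ w ∈ A}
  have hlabel : ∀ f v w, label f v = label f w ↔ ∀ A ∈ T f, v ∈ A ↔ w ∈ A := by
    intro f v w
    simp only [label, Set.ext_iff, Set.mem_ofPred_eq, and_congr_right_iff]
  obtain ⟨d, hd0, hoff, hrow, hcol⟩ := exists_ne_zero_class_sums_eq_zero_of_support S
    ⟨(w₀, f₀), (hS _ _).2 ⟨h₀, h₁⟩⟩ Prod.fst (fun e => (e.2, label e.2 e.1))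
    (fun e => ∑ f, x e.1 f = 1) (fun e => ∃ A ∈ T e.2, e.1 ∈ A)
    (by
      rintro ⟨w, f⟩ he hsum
      rw [hS] at he
      obtain ⟨f', -, hne, hf'⟩ := exists_ne_fractional Finset.univ (x w) 1 (by simpa using hsum)
        (Finset.mem_univ f) ((hx.1 w f).lt_of_ne' he.1) ((hle w f).lt_of_ne he.2)
      exact ⟨(w, f'), (hS _ _).2 hf', by simpa using hne, hsum, rfl⟩)
    (by
      rintro ⟨w, f⟩ he hcov
      rw [hS] at he
      obtain ⟨n, hn⟩ := exists_int_sum_atom (T f) (hT f) (fun w => x w f)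
        (fun A hA => ⟨_, hA.2⟩) w hcov
      obtain ⟨v, hv, hne, hv'⟩ := exists_ne_fractional _ (fun w => x w f) n hn
        (by simp)
        ((hx.1 w f).lt_of_ne' he.1) ((hle w f).lt_of_ne he.2)
      replace hv : ∀ A ∈ T f, v ∈ A ↔ w ∈ A := by simpa using hv
      obtain ⟨A, hA, hwA⟩ := hcov
      exact ⟨(v, f), (hS _ _).2 hv', by simpa using hne, ⟨A, hA, (hv A hA).2 hwA⟩,
        Prod.ext rfl ((hlabel f v w).2 hv)⟩)
  refine ⟨fun w f => d (w, f), fun h => hd0 (funext fun e => congrFun (congrFun h e.1) e.2),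
    fun w f h => hoff _ fun he => ((hS w f).1 he).1 h, fun w hw => ?_, fun f D hD hDx => ?_⟩
  · rw [← hrow w]
    refine Finset.sum_bij (fun f _ => (w, f)) (by simp [hw]) (by simp) ?_ (by simp)
    rintro ⟨w', f⟩ h
    obtain rfl : w' = w := by
      simp only [Finset.mem_filter] at h
      exact h.2.2
    exact ⟨f, Finset.mem_univ _, rfl⟩
  · have hDT : D ∈ T f := ⟨hD, hDx⟩
    rw [← Finset.sum_fiberwise_of_maps_to (t := D.image (label f)) (g := label f)
      fun w hw => Finset.mem_image_of_mem _ hw]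
    refine Finset.sum_eq_zero fun c hc => ?_
    obtain ⟨w, hw, rfl⟩ := Finset.mem_image.1 hc
    rw [← hcol (f, label f w)]
    refine Finset.sum_bij (fun v _ => (v, f)) ?_ (by simp) ?_ (by simp)
    · intro v hv
      simp only [Finset.mem_filter] at hv ⊢
      exact ⟨Finset.mem_univ _, ⟨D, hDT, hv.1⟩, Prod.ext rfl hv.2⟩
    · rintro ⟨v, f'⟩ h
      simp only [Finset.mem_filter] at h
      obtain ⟨-, -, h⟩ := h
      obtain ⟨rfl, h⟩ := Prod.ext_iff.1 h
      exact ⟨v, Finset.mem_filter.2 ⟨((hlabel _ v w).1 h D hDT).2 hw, h⟩, rfl⟩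

/-- **Integral optimal solutions of the matching LP under polymatroid constraints.**
If each `ℋ f` is an intersecting family with nonnegative integer quotas `lam f` that are
submodular on intersecting pairs, then the matching LP has an optimal solution with all
entries in `{0, 1}`. -/
theorem lp_has_integral_optimal_solution
    {W F : Type*} [Fintype W] [DecidableEq W] [Fintype F] [DecidableEq F]
    (α : W → F → ℝ) (ℋ : F → Set (Finset W)) (lam : F → Finset W → ℤ)
    (hpos : ∀ f : F, ∀ D ∈ ℋ f, 0 ≤ lam f D)
    (hfam : ∀ f : F, IntersectingFamily (ℋ f))
    (hsub : ∀ f : F, SubmodularOnIntersecting (ℋ f) (lam f)) :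
    ∃ x : W → F → ℝ, LPFeasible ℋ lam x ∧
      (∀ y : W → F → ℝ, LPFeasible ℋ lam y → LPobj α y ≤ LPobj α x) ∧
      ∀ w f, x w f = 0 ∨ x w f = 1 := by
  have hcomp := isCompact_setOf_LPFeasible ℋ lam
  have hcont : Continuous (LPobj α) := by
    unfold LPobj
    fun_prop
  have hne : {x : W → F → ℝ | LPFeasible ℋ lam x}.Nonempty :=
    ⟨0, by simp, by simp, fun f D hD => by simpa using hpos f D hD⟩
  obtain ⟨z, hz, hzmax⟩ := hcomp.exists_isMaxOn hne hcont.continuousOn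
  have hOcomp : IsCompact ({x | LPFeasible ℋ lam x} ∩ {x | LPobj α z ≤ LPobj α x}) :=
    hcomp.inter_right (isClosed_le continuous_const hcont)
  obtain ⟨x, ⟨hx, hzx⟩, hext⟩ := hOcomp.extremePoints_nonempty ⟨z, hz, le_refl (LPobj α z)⟩
  replace hzx : LPobj α z ≤ LPobj α x := hzx
  refine ⟨x, hx, fun y hy => (hzmax hy).trans hzx, fun w f => ?_⟩
  by_contra! hfrac
  obtain ⟨d, hd, h0, hrow, hcol⟩ := hx.exists_direction hfam hsub hfrac.1 hfrac.2
  have hev := hx.eventually_add_mul h0 hrow hcol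
  have hneg : Tendsto (fun t : ℝ => -t) (𝓝 0) (𝓝 0) := by
    simpa using (continuous_neg (G := ℝ)).tendsto 0
  obtain ⟨t, ⟨ht₁, ht₂⟩, ht⟩ := (((hev.and (hneg.eventually hev)).filter_mono
    nhdsWithin_le_nhds).and (self_mem_nhdsWithin (s := Set.Ioi (0 : ℝ)))).exists
  have hobj : ∀ s : ℝ, LPobj α (fun w f => x w f + s * d w f) = LPobj α x + s * LPobj α d := by
    intro s
    simp only [LPobj, Finset.mul_sum, ← Finset.sum_add_distrib]
    exact Finset.sum_congr rfl fun w _ => Finset.sum_congr rfl fun f _ => by ring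
  have hle₁ := (hzmax ht₁).trans hzx
  have hle₂ := (hzmax ht₂).trans hzx
  rw [hobj] at hle₁ hle₂
  have hge₁ : LPobj α z ≤ LPobj α fun w f => x w f + t * d w f := by
    rw [hobj]
    linarith
  have hge₂ : LPobj α z ≤ LPobj α fun w f => x w f + -t * d w f := by
    rw [hobj]
    linarith
  have heq := hext ⟨ht₁, hge₁⟩ ⟨ht₂, hge₂⟩
    ⟨1 / 2, 1 / 2, by norm_num, by norm_num, by norm_num, by
      ext w f
      simp only [Pi.add_apply, Pi.smul_apply, smul_eq_mul]
      ring⟩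
  refine hd (funext fun w => funext fun f => ?_)
  have := congrFun (congrFun heq w) f
  simpa [(show 0 < t from ht).ne'] using this

end TwoSidedMatching
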